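/- arXiv:2011.07877 — 4 statements merged into one kernel-verified Lean document; each statement's English description precedes it below -/
import Mathlib

section
/- Let n ≥ 1 be an integer and let q, α, β, γ, x ∈ ℂ be nonzero. Assume q^j ≠ 1 for all integers 1 ≤ j ≤ n, and assume α ≠ q^{−i} and γ ≠ q^{−i} for all integers 1 ≤ i ≤ n. Then ∑_{m=0}^{n} q^{−m} (xβ/γ)^{m} · (q^{n+1−m}, q^{−m−n}/(αβ), q^{1−m}/x ; q)_m / (q^{−m}/α, q^{−m}/γ, q^{−m} ; q)_m = ∑_{m=0}^{n} [(q^{−n};q)_m (αβ q^{n+1};q)_m (x;q)_m / ((q;q)_m (αq;q)_m (γq;q)_m)] · q^{m}, the right-hand side being the terminating big q-Jacobi polynomial J_n(x;α,β,γ;q). -/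
/-- The `q`-Pochhammer symbol `(a;q)_m = ∏_{j=0}^{m-1} (1 - a q^j)`. -/
noncomputable def qPoch (a q : ℂ) (m : ℕ) : ℂ := ∏ j ∈ Finset.range m, (1 - a * q ^ j)

/-!
The two sums agree term by term. Reading a product `(a;q)_m` from its last factor to its first gives
`(q^{1-m}/a;q)_m = (-1/a)^m q^{-m(m-1)/2} (a;q)_m`. In a quotient of two such symbols the sign and
the power of `q` cancel, and only the factor `(b/a)^m` is left. Applied to the three quotients in
each term, this produces `(γ q²/(x β))^m`, which turns `q^{-m} (x β/γ)^m` into `q^m`.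
-/

theorem qPoch_zpow_one_sub_div {q a : ℂ} (hq : q ≠ 0) (ha : a ≠ 0) (m : ℕ) :
    qPoch (q ^ (1 - (m : ℤ)) / a) q m = (-1 / a) ^ m * (q ^ m.choose 2)⁻¹ * qPoch a q m := by
  have hfactor : ∀ j ∈ Finset.range m,
      1 - q ^ (1 - (m : ℤ)) / a * q ^ (m - 1 - j) = -1 / a * (q ^ j)⁻¹ * (1 - a * q ^ j) := by
    intro j hj
    have hjm : j < m := Finset.mem_range.mp hj
    have hpow : q ^ (1 - (m : ℤ)) * q ^ (m - 1 - j) = (q ^ j)⁻¹ := by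
      rw [← zpow_natCast, ← zpow_natCast, ← zpow_neg, ← zpow_add₀ hq]
      congr 1
      omega
    rw [div_mul_eq_mul_div, hpow]
    field_simp
    ring
  calc qPoch (q ^ (1 - (m : ℤ)) / a) q m
      = ∏ j ∈ Finset.range m, (1 - q ^ (1 - (m : ℤ)) / a * q ^ (m - 1 - j)) :=
        (Finset.prod_range_reflect _ m).symm
    _ = ∏ j ∈ Finset.range m, -1 / a * (q ^ j)⁻¹ * (1 - a * q ^ j) :=
        Finset.prod_congr rfl hfactor
    _ = (-1 / a) ^ m * (q ^ m.choose 2)⁻¹ * qPoch a q m := by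
        rw [Finset.prod_mul_distrib, Finset.prod_mul_distrib, Finset.prod_const,
          Finset.card_range, Finset.prod_inv_distrib, Finset.prod_pow_eq_pow_sum,
          Finset.sum_range_id, ← Nat.choose_two_right, qPoch]

theorem qPoch_zpow_one_sub_div_div {q a b : ℂ} (hq : q ≠ 0) (ha : a ≠ 0) (hb : b ≠ 0) (m : ℕ) :
    qPoch (q ^ (1 - (m : ℤ)) / a) q m / qPoch (q ^ (1 - (m : ℤ)) / b) q m
      = (b / a) ^ m * (qPoch a q m / qPoch b q m) := by
  have hprefactor : (-1 / a) ^ m * (q ^ m.choose 2)⁻¹ / ((-1 / b) ^ m * (q ^ m.choose 2)⁻¹)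
      = (b / a) ^ m := by
    rw [mul_div_mul_right _ _ (inv_ne_zero (pow_ne_zero _ hq)), ← div_pow]
    congr 1
    field_simp
  rw [qPoch_zpow_one_sub_div hq ha, qPoch_zpow_one_sub_div hq hb, mul_div_mul_comm, hprefactor]

theorem qPoch_mul_three_zpow_one_sub_div_div {q a b c d e f : ℂ} (hq : q ≠ 0) (ha : a ≠ 0)
    (hb : b ≠ 0) (hc : c ≠ 0) (hd : d ≠ 0) (he : e ≠ 0) (hf : f ≠ 0) (m : ℕ) :
    qPoch (q ^ (1 - (m : ℤ)) / a) q m * qPoch (q ^ (1 - (m : ℤ)) / b) q m *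
        qPoch (q ^ (1 - (m : ℤ)) / c) q m /
      (qPoch (q ^ (1 - (m : ℤ)) / d) q m * qPoch (q ^ (1 - (m : ℤ)) / e) q m *
        qPoch (q ^ (1 - (m : ℤ)) / f) q m)
      = (d * e * f / (a * b * c)) ^ m *
        (qPoch a q m * qPoch b q m * qPoch c q m / (qPoch d q m * qPoch e q m * qPoch f q m)) := by
  simp only [mul_div_mul_comm, qPoch_zpow_one_sub_div_div hq ha hd,
    qPoch_zpow_one_sub_div_div hq hb he, qPoch_zpow_one_sub_div_div hq hc hf, mul_pow]
  ring

theorem zpow_neg_div_eq_zpow_one_sub_div_mul {G₀ : Type*} [GroupWithZero G₀] {q : G₀} (hq : q ≠ 0)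
    (c : G₀) (k : ℤ) : q ^ (-k) / c = q ^ (1 - k) / (c * q) := by
  rw [sub_eq_neg_add, zpow_add_one₀ hq, mul_div_mul_right _ _ hq]

/-- Case `k = 2` of Lemma 6.2 of the paper: the sum `Σ_{n,2}` equals the terminating
big `q`-Jacobi polynomial `J_n(x;α,β,γ;q)`. -/
theorem stmt3 (n : ℕ) (hn : 1 ≤ n) (q α β γ x : ℂ)
    (hq : q ≠ 0) (hα : α ≠ 0) (hβ : β ≠ 0) (hγ : γ ≠ 0) (hx : x ≠ 0)
    (hq1 : ∀ j : ℕ, 1 ≤ j → j ≤ n → q ^ j ≠ 1)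
    (hαq : ∀ i : ℤ, 1 ≤ i → i ≤ (n : ℤ) → α ≠ q ^ (-i))
    (hγq : ∀ i : ℤ, 1 ≤ i → i ≤ (n : ℤ) → γ ≠ q ^ (-i)) :
    ∑ m ∈ Finset.range (n + 1),
        q ^ (-(m : ℤ)) * (x * β / γ) ^ m *
          (qPoch (q ^ ((n : ℤ) + 1 - (m : ℤ))) q m *
            qPoch (q ^ (-(m : ℤ) - (n : ℤ)) / (α * β)) q m *
            qPoch (q ^ (1 - (m : ℤ)) / x) q m) /
          (qPoch (q ^ (-(m : ℤ)) / α) q m * qPoch (q ^ (-(m : ℤ)) / γ) q m *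
            qPoch (q ^ (-(m : ℤ))) q m)
      = ∑ m ∈ Finset.range (n + 1),
          (qPoch (q ^ (-(n : ℤ))) q m * qPoch (α * β * q ^ (n + 1)) q m * qPoch x q m) /
            (qPoch q q m * qPoch (α * q) q m * qPoch (γ * q) q m) * q ^ m := by
  have hqn : q ^ (-(n : ℤ)) ≠ 0 := zpow_ne_zero _ hq
  have hαβ : α * β * q ^ (n + 1) ≠ 0 := mul_ne_zero (mul_ne_zero hα hβ) (pow_ne_zero _ hq)
  refine Finset.sum_congr rfl fun m _ => ?_
  have harg_n : q ^ ((n : ℤ) + 1 - m) = q ^ (1 - (m : ℤ)) / q ^ (-(n : ℤ)) := by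
    rw [← zpow_sub₀ hq]
    ring_nf
  have harg_αβ : q ^ (-(m : ℤ) - n) / (α * β) = q ^ (1 - (m : ℤ)) / (α * β * q ^ (n + 1)) := by
    rw [zpow_sub₀ hq, zpow_natCast, div_div, mul_comm (q ^ n),
      zpow_neg_div_eq_zpow_one_sub_div_mul hq, pow_succ, mul_assoc _ (q ^ n)]
  have harg (c : ℂ) := zpow_neg_div_eq_zpow_one_sub_div_mul hq c m
  have harg_q : qPoch (q ^ (-(m : ℤ))) q m = qPoch (q ^ (1 - (m : ℤ)) / q) q m := by
    simpa only [div_one, one_mul] using congrArg (qPoch · q m) (harg 1)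
  have hprefactor : q ^ (-(m : ℤ)) * (x * β / γ) ^ m *
      (α * q * (γ * q) * q / (q ^ (-(n : ℤ)) * (α * β * q ^ (n + 1)) * x)) ^ m = q ^ m := by
    rw [zpow_neg, zpow_neg, zpow_natCast, zpow_natCast, ← inv_pow, ← mul_pow, ← mul_pow, pow_succ]
    congr 1
    field_simp
  rw [harg_n, harg_αβ, harg α, harg γ, harg_q, mul_div_assoc,
    qPoch_mul_three_zpow_one_sub_div_div hq hqn hαβ hx (mul_ne_zero hα hq) (mul_ne_zero hγ hq) hq,
    ← mul_assoc, hprefactor]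
  ring
end

section
/- Let n ≥ 0 be an integer and let q, α, β, γ, z ∈ ℂ be nonzero. Assume q^j ≠ 1 for all integers 1 ≤ j ≤ n, and assume αβ ≠ q^{−i}, αγ ≠ q^{−i} and βγ ≠ q^{−i} for all integers 0 ≤ i ≤ n−1. Then [α^{n} (βγ;q)_n / (γ^{n} (αβ;q)_n)] · ∑_{m=0}^{n} [(q^{−n};q)_m (γz;q)_m (γz^{−1};q)_m / ((q;q)_m (βγ;q)_m (αγ;q)_m)] · q^{m} = ∑_{m=0}^{n} [(q^{−n};q)_m (αz;q)_m (αz^{−1};q)_m / ((q;q)_m (αβ;q)_m (αγ;q)_m)] · q^{m}. -/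
/-!
The continuous dual `q`-Hahn polynomials `p_n(x; a, b, c | q)` satisfy a three-term recurrence
whose coefficients are symmetric in `a, b, c`, hence so are the polynomials. The series
`₃φ₂(q⁻ⁿ, az, az⁻¹; ab, ac; q, q)` equals `aⁿ p_n / ((ab, ac; q)_n)`, because it satisfies the same
recurrence up to normalisation: multiplication by `(1 - az)(1 - az⁻¹)` acts on the products
`(az, az⁻¹; q)_m` by a two-term rule, and the outcome is compared coefficientwise with the changes
`q⁻ⁿ ↦ q⁻ⁿ⁻¹` and `q⁻ⁿ ↦ q⁻ⁿ⁺¹`. Exchanging `a` and `c` then only affects the prefactors.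
-/

section CommRing

variable {R : Type*} [CommRing R]

/-- The `q`-Pochhammer symbol `(a;q)_m` over an arbitrary commutative ring; for `ℂ` it agrees
definitionally with `qPoch`. -/
def qPochhammer (a q : R) (m : ℕ) : R := ∏ j ∈ Finset.range m, (1 - a * q ^ j)

lemma qPochhammer_zero (a q : R) : qPochhammer a q 0 = 1 := Finset.prod_range_zero _

lemma qPochhammer_succ (a q : R) (m : ℕ) :
    qPochhammer a q (m + 1) = qPochhammer a q m * (1 - a * q ^ m) :=
  Finset.prod_range_succ _ m

lemma qPochhammer_succ' (a q : R) (m : ℕ) :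
    qPochhammer a q (m + 1) = (1 - a) * qPochhammer (a * q) q m := by
  simp only [qPochhammer, Finset.prod_range_succ', pow_zero, mul_one, pow_succ', mul_assoc]
  exact mul_comm _ _

lemma qPochhammer_dvd_of_le (a q : R) {m n : ℕ} (hmn : m ≤ n) :
    qPochhammer a q m ∣ qPochhammer a q n :=
  Finset.prod_dvd_prod_of_subset _ _ _ (Finset.range_subset_range.2 hmn)

/-- The Askey–Wilson basis `(az, az⁻¹; q)_m`, written as a polynomial in `x = z + z⁻¹`. -/
def askeyWilsonBasis (q a x : R) (m : ℕ) : R :=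
  ∏ j ∈ Finset.range m, (1 - a * q ^ j * x + (a * q ^ j) ^ 2)

lemma askeyWilsonBasis_succ (q a x : R) (m : ℕ) :
    askeyWilsonBasis q a x (m + 1) =
      askeyWilsonBasis q a x m * (1 - a * q ^ m * x + (a * q ^ m) ^ 2) :=
  Finset.prod_range_succ _ m

lemma mul_sum_askeyWilsonBasis (q a x : R) (f : ℕ → R) (N : ℕ) :
    (1 - a * x + a ^ 2) * ∑ m ∈ Finset.range (N + 1), f m * askeyWilsonBasis q a x m * q ^ m =
      ∑ m ∈ Finset.range N, (f m - (1 - q ^ (m + 1)) * (1 - a ^ 2 * q ^ (m + 1)) * f (m + 1)) *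
        askeyWilsonBasis q a x (m + 1) + f N * askeyWilsonBasis q a x (N + 1) := by
  induction N with
  | zero =>
    simp only [Finset.sum_range_succ, Finset.sum_range_zero, askeyWilsonBasis_succ]
    ring
  | succ N ih =>
    rw [Finset.sum_range_succ, mul_add, ih, Finset.sum_range_succ,
      askeyWilsonBasis_succ q a x (N + 1)]
    ring

/-- The denominator `(q, d, e; q)_m` of the series `₃φ₂(y, A, B; d, e; q, q)`. -/
def phiDenom (q d e : R) (m : ℕ) : R :=
  qPochhammer q q m * qPochhammer d q m * qPochhammer e q m

lemma phiDenom_succ (q d e : R) (m : ℕ) :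
    phiDenom q d e (m + 1) =
      (1 - q ^ (m + 1)) * (1 - d * q ^ m) * (1 - e * q ^ m) * phiDenom q d e m := by
  simp only [phiDenom, qPochhammer_succ]
  ring

lemma phiDenom_ne_zero_of_le {q d e : R} {m n : ℕ} (hmn : m ≤ n) (h : phiDenom q d e n ≠ 0) :
    phiDenom q d e m ≠ 0 :=
  ne_zero_of_dvd_ne_zero h <| mul_dvd_mul
    (mul_dvd_mul (qPochhammer_dvd_of_le q q hmn) (qPochhammer_dvd_of_le d q hmn))
    (qPochhammer_dvd_of_le e q hmn)

/-- The continuous dual `q`-Hahn polynomial `p_n(x/2; a, b, c | q)` in the standard normalisation,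
defined by its three-term recurrence. The variable is `x = z + z⁻¹ = 2 cos θ` for `z = e^{iθ}`,
and the value at index `1` is what the recurrence gives from `p_0 = 1` and `p_{-1} = 0`. -/
def continuousDualQHahn (q a b c x : R) : ℕ → R
  | 0 => 1
  | 1 => x - (a + b + c) + a * b * c
  | n + 2 =>
    (x - (a + b + c) * q ^ (n + 1) + a * b * c * q ^ n * (q ^ (n + 2) + q ^ (n + 1) - 1)) *
        continuousDualQHahn q a b c x (n + 1) -
      (1 - q ^ (n + 1)) * (1 - a * b * q ^ n) * (1 - a * c * q ^ n) * (1 - b * c * q ^ n) *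
        continuousDualQHahn q a b c x n

lemma continuousDualQHahn_swap_left_right (q a b c x : R) (n : ℕ) :
    continuousDualQHahn q c b a x n = continuousDualQHahn q a b c x n := by
  induction n using Nat.twoStepInduction with
  | zero => rfl
  | one => simp only [continuousDualQHahn]; ring
  | more n ih₀ ih₁ => simp only [continuousDualQHahn, ih₀, ih₁]; ring

end CommRing

section Field

variable {K : Type*} [Field K]

lemma qPochhammer_zpow_neg_eq_zero {q : K} (hq : q ≠ 0) {n m : ℕ} (hnm : n < m) :
    qPochhammer (q ^ (-(n : ℤ))) q m = 0 := by
  apply Finset.prod_eq_zero (Finset.mem_range.2 hnm)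
  rw [zpow_neg, zpow_natCast, inv_mul_cancel₀ (pow_ne_zero n hq), sub_self]

lemma qPochhammer_ne_zero_of_forall_ne_zpow_neg {a q : K} {n : ℕ}
    (h : ∀ i : ℕ, i < n → a ≠ q ^ (-(i : ℤ))) : qPochhammer a q n ≠ 0 := by
  refine Finset.prod_ne_zero_iff.2 fun j hj hzero ↦ h j (Finset.mem_range.1 hj) ?_
  rw [zpow_neg, zpow_natCast]
  exact eq_inv_of_mul_eq_one_left (sub_eq_zero.1 hzero).symm

lemma qPochhammer_self_ne_zero {q : K} {n : ℕ} (h : ∀ j : ℕ, 1 ≤ j → j ≤ n → q ^ j ≠ 1) :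
    qPochhammer q q n ≠ 0 := by
  refine Finset.prod_ne_zero_iff.2 fun j hj hzero ↦
    h (j + 1) j.succ_pos (Finset.mem_range.1 hj) ?_
  rw [pow_succ']
  exact (sub_eq_zero.1 hzero).symm

lemma qPochhammer_mul_qPochhammer_inv (q a : K) {z : K} (hz : z ≠ 0) (m : ℕ) :
    qPochhammer (a * z) q m * qPochhammer (a * z⁻¹) q m =
      askeyWilsonBasis q a (z + z⁻¹) m := by
  rw [qPochhammer, qPochhammer, askeyWilsonBasis, ← Finset.prod_mul_distrib]
  refine Finset.prod_congr rfl fun j _ ↦ ?_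
  field_simp
  ring

/-- The coefficient `(y;q)_m / (q, d, e; q)_m` of the series `₃φ₂(y, A, B; d, e; q, q)`, without
the factor `q ^ m`. -/
def phiCoeff (q d e y : K) (m : ℕ) : K := qPochhammer y q m / phiDenom q d e m

lemma phiCoeff_zero (q d e y : K) : phiCoeff q d e y 0 = 1 := by
  simp only [phiCoeff, phiDenom, qPochhammer_zero, mul_one, div_one]

lemma phiCoeff_mul_q_sub (q d e : K) {y : K} (hy : y ≠ 0) (m : ℕ) :
    (1 - y⁻¹) * (phiCoeff q d e (y * q) m - phiCoeff q d e y m) =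
      -(1 - q ^ m) * phiCoeff q d e y m := by
  have hshift : (1 - y) * qPochhammer (y * q) q m = qPochhammer y q m * (1 - y * q ^ m) := by
    rw [← qPochhammer_succ', qPochhammer_succ]
  rw [phiCoeff, phiCoeff, div_sub_div_same, ← mul_div_assoc, ← mul_div_assoc]
  congr 1
  field_simp
  linear_combination -hshift

section Contiguous

variable {q d e : K} {m : ℕ}

lemma mul_phiCoeff_succ_eq_div (h : phiDenom q d e (m + 1) ≠ 0) (y : K) :
    (1 - q ^ (m + 1)) * (1 - d * q ^ m) * (1 - e * q ^ m) * phiCoeff q d e y (m + 1) =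
      qPochhammer y q (m + 1) / phiDenom q d e m := by
  rw [phiDenom_succ] at h
  rw [phiCoeff, phiDenom_succ, ← mul_div_assoc, mul_div_mul_left _ _ (left_ne_zero_of_mul h)]

lemma mul_phiCoeff_succ (h : phiDenom q d e (m + 1) ≠ 0) (y : K) :
    (1 - q ^ (m + 1)) * (1 - d * q ^ m) * (1 - e * q ^ m) * phiCoeff q d e y (m + 1) =
      (1 - y * q ^ m) * phiCoeff q d e y m := by
  rw [mul_phiCoeff_succ_eq_div h, qPochhammer_succ, phiCoeff, mul_comm, mul_div_assoc]

lemma mul_phiCoeff_div_q_succ (h : phiDenom q d e (m + 1) ≠ 0) (hq : q ≠ 0) (y : K) :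
    (1 - q ^ (m + 1)) * (1 - d * q ^ m) * (1 - e * q ^ m) * phiCoeff q d e (y / q) (m + 1) =
      (1 - y / q) * phiCoeff q d e y m := by
  rw [mul_phiCoeff_succ_eq_div h, qPochhammer_succ', div_mul_cancel₀ y hq, phiCoeff,
    mul_div_assoc]

lemma phiCoeff_contiguous (h : phiDenom q d e (m + 1) ≠ 0) (hq : q ≠ 0) (a : K) {y : K}
    (hy : y ≠ 0) :
    ((1 - d * y⁻¹) * (1 - e * y⁻¹) *
          (phiCoeff q d e (y / q) (m + 1) - phiCoeff q d e y (m + 1)) +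
        (1 - y⁻¹) * (a ^ 2 - d * e * (y * q)⁻¹) *
          (phiCoeff q d e (y * q) (m + 1) - phiCoeff q d e y (m + 1))) * q ^ (m + 1) =
      -(phiCoeff q d e y m -
        (1 - q ^ (m + 1)) * (1 - a ^ 2 * q ^ (m + 1)) * phiCoeff q d e y (m + 1)) := by
  have hfactor : (1 - q ^ (m + 1)) * (1 - d * q ^ m) * (1 - e * q ^ m) ≠ 0 :=
    left_ne_zero_of_mul (phiDenom_succ q d e m ▸ h)
  have hsucc := mul_phiCoeff_succ h y
  have hdiv := mul_phiCoeff_div_q_succ h hq y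
  have hmul := phiCoeff_mul_q_sub q d e hy (m + 1)
  apply mul_left_cancel₀ hfactor
  -- `hdiv` and `hmul` eliminate the shifted coefficients; what is left is a multiple of `hsucc`.
  linear_combination (norm := skip)
    (1 - d * y⁻¹) * (1 - e * y⁻¹) * q ^ (m + 1) * (hdiv - hsucc) +
      (1 - q ^ (m + 1)) * (1 - d * q ^ m) * (1 - e * q ^ m) * q ^ (m + 1) *
        (a ^ 2 - d * e * (y * q)⁻¹) * hmul -
      (1 - q ^ (m + 1)) * (1 - d * e * q ^ m * y⁻¹) * hsucc
  field_simp
  ring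

end Contiguous

/-- The series `₃φ₂(y, az, az⁻¹; d, e; q, q)` truncated after the term of index `N`, as a function
of `x = z + z⁻¹`. The truncation allows series with different `y` to be compared termwise. -/
def phiSum (q d e a x y : K) (N : ℕ) : K :=
  ∑ m ∈ Finset.range (N + 1), phiCoeff q d e y m * askeyWilsonBasis q a x m * q ^ m

lemma phiSum_zero (q d e a x y : K) : phiSum q d e a x y 0 = 1 := by
  simp [phiSum, phiCoeff_zero, askeyWilsonBasis]

lemma phiSum_zpow_neg_of_le {q : K} (hq : q ≠ 0) (d e a x : K) {n N : ℕ} (hnN : n ≤ N) :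
    phiSum q d e a x (q ^ (-(n : ℤ))) N = phiSum q d e a x (q ^ (-(n : ℤ))) n := by
  refine (Finset.sum_subset (Finset.range_subset_range.2 (by lia)) fun m _ hm ↦ ?_).symm
  have hnm : n < m := by simpa using hm
  rw [phiCoeff, qPochhammer_zpow_neg_eq_zero hq hnm, zero_div, zero_mul, zero_mul]

lemma phiSum_sub_phiSum (q d e a x y y' : K) (N : ℕ) :
    phiSum q d e a x y' N - phiSum q d e a x y N =
      ∑ m ∈ Finset.range N, (phiCoeff q d e y' (m + 1) - phiCoeff q d e y (m + 1)) *
        askeyWilsonBasis q a x (m + 1) * q ^ (m + 1) := by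
  simp only [phiSum, Finset.sum_range_succ' _ N, phiCoeff_zero, add_sub_add_right_eq_sub,
    ← Finset.sum_sub_distrib, sub_mul]

lemma phiSum_contiguous {q d e y : K} {N : ℕ} (h : phiDenom q d e N ≠ 0) (hq : q ≠ 0)
    (hy : y ≠ 0) (hyN : qPochhammer y q N = 0) (a x : K) :
    (1 - d * y⁻¹) * (1 - e * y⁻¹) *
          (phiSum q d e a x (y / q) N - phiSum q d e a x y N) +
        (1 - y⁻¹) * (a ^ 2 - d * e * (y * q)⁻¹) *
          (phiSum q d e a x (y * q) N - phiSum q d e a x y N) =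
      -((1 - a * x + a ^ 2) * phiSum q d e a x y N) := by
  have hlast : phiCoeff q d e y N = 0 := by rw [phiCoeff, hyN, zero_div]
  rw [phiSum_sub_phiSum, phiSum_sub_phiSum, phiSum, mul_sum_askeyWilsonBasis, hlast, zero_mul,
    add_zero, Finset.mul_sum, Finset.mul_sum, ← Finset.sum_add_distrib, ← Finset.sum_neg_distrib]
  refine Finset.sum_congr rfl fun m hm ↦ ?_
  have hcoeff := phiCoeff_contiguous
    (phiDenom_ne_zero_of_le (Finset.mem_range.1 hm) h) hq a hy
  linear_combination askeyWilsonBasis q a x (m + 1) * hcoeff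

/-- The terminating series `₃φ₂(q⁻ⁿ, az, az⁻¹; d, e; q, q)` as a function of `x = z + z⁻¹`. -/
def dualQHahnSeries (q d e a x : K) (n : ℕ) : K := phiSum q d e a x (q ^ (-(n : ℤ))) n

lemma sum_qPochhammer_eq_dualQHahnSeries (q d e a : K) {z : K} (hz : z ≠ 0) (n : ℕ) :
    ∑ m ∈ Finset.range (n + 1),
        (qPochhammer (q ^ (-(n : ℤ))) q m * qPochhammer (a * z) q m * qPochhammer (a * z⁻¹) q m) /
          (qPochhammer q q m * qPochhammer d q m * qPochhammer e q m) * q ^ m =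
      dualQHahnSeries q d e a (z + z⁻¹) n := by
  refine Finset.sum_congr rfl fun m _ ↦ ?_
  rw [mul_assoc (qPochhammer _ q m), qPochhammer_mul_qPochhammer_inv q a hz, mul_div_right_comm,
    phiCoeff, phiDenom]

lemma dualQHahnSeries_zero (q d e a x : K) : dualQHahnSeries q d e a x 0 = 1 :=
  phiSum_zero ..

lemma dualQHahnSeries_one {q d e : K} (h : phiDenom q d e 1 ≠ 0) (hq : q ≠ 0) (a x : K) :
    (1 - d) * (1 - e) * (dualQHahnSeries q d e a x 1 - 1) = -(1 - a * x + a ^ 2) := by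
  have hone : phiSum q d e a x 1 1 = 1 := by
    simpa [phiSum_zero] using phiSum_zpow_neg_of_le hq d e a x zero_le_one
  have hvanish : qPochhammer 1 q 1 = 0 := by simp [qPochhammer]
  have hcontiguous := phiSum_contiguous h hq one_ne_zero hvanish a x
  rw [hone, one_div, inv_one] at hcontiguous
  rw [dualQHahnSeries, Nat.cast_one, zpow_neg_one]
  linear_combination hcontiguous

lemma dualQHahnSeries_add_two {q d e : K} {n : ℕ} (h : phiDenom q d e (n + 2) ≠ 0) (hq : q ≠ 0)
    (a x : K) :
    (1 - d * q ^ (n + 1)) * (1 - e * q ^ (n + 1)) *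
          (dualQHahnSeries q d e a x (n + 2) - dualQHahnSeries q d e a x (n + 1)) +
        (1 - q ^ (n + 1)) * (a ^ 2 - d * e * q ^ n) *
          (dualQHahnSeries q d e a x n - dualQHahnSeries q d e a x (n + 1)) =
      -((1 - a * x + a ^ 2) * dualQHahnSeries q d e a x (n + 1)) := by
  have hcontiguous := phiSum_contiguous h hq (zpow_ne_zero (-((n + 1 : ℕ) : ℤ)) hq)
    (qPochhammer_zpow_neg_eq_zero hq (Nat.lt_succ_self (n + 1))) a x
  have hdiv : q ^ (-((n + 1 : ℕ) : ℤ)) / q = q ^ (-((n + 2 : ℕ) : ℤ)) := by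
    rw [div_eq_mul_inv, ← zpow_sub_one₀ hq]
    congr 1
  have hmul : q ^ (-((n + 1 : ℕ) : ℤ)) * q = q ^ (-(n : ℤ)) := by
    rw [← zpow_add_one₀ hq]
    congr 1
    lia
  rw [hdiv, hmul, phiSum_zpow_neg_of_le hq d e a x (Nat.le_succ (n + 1)),
    phiSum_zpow_neg_of_le hq d e a x (Nat.le_add_right n 2)] at hcontiguous
  simpa only [zpow_neg, inv_inv, zpow_natCast, dualQHahnSeries] using hcontiguous

theorem qPochhammer_mul_dualQHahnSeries {q a b c : K} (hq : q ≠ 0) (x : K) {n : ℕ}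
    (h : phiDenom q (a * b) (a * c) n ≠ 0) :
    qPochhammer (a * b) q n * qPochhammer (a * c) q n * dualQHahnSeries q (a * b) (a * c) a x n =
      a ^ n * continuousDualQHahn q a b c x n := by
  induction n using Nat.twoStepInduction with
  | zero =>
    simp only [qPochhammer_zero, dualQHahnSeries_zero, continuousDualQHahn, pow_zero, mul_one]
  | one =>
    have hone := dualQHahnSeries_one h hq a x
    simp only [qPochhammer_succ, qPochhammer_zero, continuousDualQHahn, pow_zero, pow_one]
    linear_combination hone
  | more n ih₀ ih₁ =>
    have hrec := dualQHahnSeries_add_two h hq a x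
    specialize ih₀ (phiDenom_ne_zero_of_le (Nat.le_add_right n 2) h)
    specialize ih₁ (phiDenom_ne_zero_of_le (Nat.le_succ (n + 1)) h)
    have ih₀' : qPochhammer (a * b) q (n + 1) * qPochhammer (a * c) q (n + 1) *
          dualQHahnSeries q (a * b) (a * c) a x n =
        (1 - a * b * q ^ n) * (1 - a * c * q ^ n) * (a ^ n * continuousDualQHahn q a b c x n) := by
      rw [← ih₀, qPochhammer_succ, qPochhammer_succ]
      ring
    rw [qPochhammer_succ _ _ (n + 1), qPochhammer_succ _ _ (n + 1), continuousDualQHahn]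
    linear_combination
      qPochhammer (a * b) q (n + 1) * qPochhammer (a * c) q (n + 1) * hrec +
        ((1 - a * b * q ^ (n + 1)) * (1 - a * c * q ^ (n + 1)) +
          (1 - q ^ (n + 1)) * (a ^ 2 - a * b * (a * c) * q ^ n) - (1 - a * x + a ^ 2)) * ih₁ -
        (1 - q ^ (n + 1)) * (a ^ 2 - a * b * (a * c) * q ^ n) * ih₀'

theorem dualQHahnSeries_exchange {q a b c : K} (hq : q ≠ 0) (x : K) {n : ℕ}
    (hab : phiDenom q (a * b) (a * c) n ≠ 0) (hbc : phiDenom q (b * c) (a * c) n ≠ 0) :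
    a ^ n * qPochhammer (b * c) q n * dualQHahnSeries q (b * c) (a * c) c x n =
      c ^ n * qPochhammer (a * b) q n * dualQHahnSeries q (a * b) (a * c) a x n := by
  have hac : qPochhammer (a * c) q n ≠ 0 := right_ne_zero_of_mul hab
  have hrep_a := qPochhammer_mul_dualQHahnSeries hq x hab
  rw [mul_comm b c, mul_comm a c] at hbc
  have hrep_c := qPochhammer_mul_dualQHahnSeries hq x hbc
  rw [continuousDualQHahn_swap_left_right, mul_comm c b, mul_comm c a] at hrep_c
  apply mul_left_cancel₀ hac
  linear_combination a ^ n * hrep_c - c ^ n * hrep_a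

theorem stmt7_general (n : ℕ) (q α β γ z : K) (hq : q ≠ 0) (hγ : γ ≠ 0) (hz : z ≠ 0)
    (hq1 : ∀ j : ℕ, 1 ≤ j → j ≤ n → q ^ j ≠ 1)
    (hαβ : ∀ i : ℕ, i < n → α * β ≠ q ^ (-(i : ℤ)))
    (hαγ : ∀ i : ℕ, i < n → α * γ ≠ q ^ (-(i : ℤ)))
    (hβγ : ∀ i : ℕ, i < n → β * γ ≠ q ^ (-(i : ℤ))) :
    α ^ n * qPochhammer (β * γ) q n / (γ ^ n * qPochhammer (α * β) q n) *
        ∑ m ∈ Finset.range (n + 1),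
          (qPochhammer (q ^ (-(n : ℤ))) q m * qPochhammer (γ * z) q m *
              qPochhammer (γ * z⁻¹) q m) /
            (qPochhammer q q m * qPochhammer (β * γ) q m * qPochhammer (α * γ) q m) * q ^ m
      = ∑ m ∈ Finset.range (n + 1),
          (qPochhammer (q ^ (-(n : ℤ))) q m * qPochhammer (α * z) q m *
              qPochhammer (α * z⁻¹) q m) /
            (qPochhammer q q m * qPochhammer (α * β) q m * qPochhammer (α * γ) q m) * q ^ m := by
  have hqn := qPochhammer_self_ne_zero hq1
  have hαβn := qPochhammer_ne_zero_of_forall_ne_zpow_neg hαβ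
  have hαγn := qPochhammer_ne_zero_of_forall_ne_zpow_neg hαγ
  have hβγn := qPochhammer_ne_zero_of_forall_ne_zpow_neg hβγ
  rw [sum_qPochhammer_eq_dualQHahnSeries q _ _ γ hz, sum_qPochhammer_eq_dualQHahnSeries q _ _ α hz,
    div_mul_eq_mul_div, div_eq_iff (mul_ne_zero (pow_ne_zero n hγ) hαβn),
    mul_comm (dualQHahnSeries ..)]
  exact dualQHahnSeries_exchange hq _ (mul_ne_zero (mul_ne_zero hqn hαβn) hαγn)
    (mul_ne_zero (mul_ne_zero hqn hβγn) hαγn)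

end Field

/-- Equation (5.37) in the proof of Theorem 5.3 of the paper: a parameter-exchange symmetry
of the terminating continuous dual `q`-Hahn series. -/
theorem stmt7 (n : ℕ) (q α β γ z : ℂ)
    (hq : q ≠ 0) (hα : α ≠ 0) (hβ : β ≠ 0) (hγ : γ ≠ 0) (hz : z ≠ 0)
    (hq1 : ∀ j : ℕ, 1 ≤ j → j ≤ n → q ^ j ≠ 1)
    (hαβ : ∀ i : ℕ, i < n → α * β ≠ q ^ (-(i : ℤ)))
    (hαγ : ∀ i : ℕ, i < n → α * γ ≠ q ^ (-(i : ℤ)))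
    (hβγ : ∀ i : ℕ, i < n → β * γ ≠ q ^ (-(i : ℤ))) :
    α ^ n * qPoch (β * γ) q n / (γ ^ n * qPoch (α * β) q n) *
        ∑ m ∈ Finset.range (n + 1),
          (qPoch (q ^ (-(n : ℤ))) q m * qPoch (γ * z) q m * qPoch (γ * z⁻¹) q m) /
            (qPoch q q m * qPoch (β * γ) q m * qPoch (α * γ) q m) * q ^ m
      = ∑ m ∈ Finset.range (n + 1),
          (qPoch (q ^ (-(n : ℤ))) q m * qPoch (α * z) q m * qPoch (α * z⁻¹) q m) /
            (qPoch q q m * qPoch (α * β) q m * qPoch (α * γ) q m) * q ^ m :=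
  stmt7_general n q α β γ z hq hγ hz hq1 hαβ hαγ hβγ
end

section
/- Let b > 0 and σ ∈ ℝ. For real Λ > 0 define χ(Λ) = 2π e^{πb(σ + ib/2)} (ibΛ)^{−b(b − 2iσ)} / [ Γ((1−b²)/2 − ib(Λ − σ)) · Γ((1−b²)/2 + ib(Λ + σ)) ], where Γ is the complex Gamma function and the complex power uses the principal branch of the logarithm. Then e^{−πbΛ} χ(Λ) → 1 as Λ → +∞. -/
open Complex Filter

/-!
The heart of the matter is the classical asymptotics `z ^ (β - α) * Γ (z + α) / Γ (z + β) → 1`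
as `z → ∞` in a closed sector avoiding the negative real axis. By Euler's limit formula for `Γ`
the left side is the infinite product of `(w + β) / (w + α) * (1 + w⁻¹) ^ (α - β)` over
`w = z, z + 1, z + 2, …`. The exponent is chosen so that each factor is `1 + O(‖w‖⁻²)`, and in the
sector `‖z + k‖` is bounded below by a multiple of `‖z‖ + k`, so that the product is
`1 + O(‖z‖⁻¹)`.

The reflection formula turns `1 / (Γ (a - z) * Γ (a + z))` into
`sin (π * (a - z)) * Γ (z + (1 - a)) / (π * Γ (z + a))`, and the sine is asymptotic to a single
exponential as `im z → ∞`. The coefficient `χ` is the case `z = i b Λ`,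
`a = (1 - b ^ 2) / 2 + i b σ`.
-/

open Asymptotics Bornology Topology
open scoped Real

lemma isBigO_sub_sq_of_hasDerivAt_zero {𝕜 E : Type*} [NontriviallyNormedField 𝕜]
    [NormedAddCommGroup E] [NormedSpace 𝕜 E] {f : 𝕜 → E} {z : 𝕜} (hf : AnalyticAt 𝕜 f z)
    (hf' : HasDerivAt f 0 z) : (fun u ↦ f (z + u) - f z) =O[𝓝 0] fun u ↦ ‖u‖ ^ 2 := by
  obtain ⟨p, hp⟩ := hf
  have hcoeff_zero : p.coeff 0 = f z := hp.coeff_zero _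
  have hcoeff_one : p.coeff 1 = 0 := hp.hasDerivAt.unique hf'
  refine (hp.isBigO_sub_partialSum_pow 2).congr_left fun u ↦ ?_
  simp [FormalMultilinearSeries.partialSum, Finset.sum_range_succ, hcoeff_zero, hcoeff_one]

lemma mul_cpow_of_arg_add_mem {x y : ℂ} (h : arg x + arg y ∈ Set.Ioc (-π) π) (s : ℂ) :
    (x * y) ^ s = x ^ s * y ^ s := by
  rcases eq_or_ne s 0 with rfl | hs
  · simp
  rcases eq_or_ne x 0 with rfl | hx
  · simp [hs]
  rcases eq_or_ne y 0 with rfl | hy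
  · simp [hs]
  rw [cpow_def_of_ne_zero (mul_ne_zero hx hy), cpow_def_of_ne_zero hx, cpow_def_of_ne_zero hy,
    log_mul hx hy h, add_mul, exp_add]

lemma natCast_mul_cpow (n : ℕ) (w s : ℂ) : (n * w) ^ s = (n : ℂ) ^ s * w ^ s :=
  mul_cpow_of_arg_add_mem (by simpa using arg_mem_Ioc w) s

section SlitPlane

variable {z : ℂ}

lemma add_natCast_mem_slitPlane (hz : z ∈ slitPlane) (n : ℕ) : z + n ∈ slitPlane := by
  rw [mem_slitPlane_iff] at hz ⊢
  simp only [add_re, natCast_re, add_im, natCast_im, add_zero]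
  exact hz.imp_left fun h ↦ by positivity

lemma arg_add_arg_one_add_inv_mem_Ioc (hz : z ∈ slitPlane) :
    arg z + arg (1 + z⁻¹) ∈ Set.Ioc (-π) π := by
  have hsq : 0 < normSq z := normSq_pos.2 (slitPlane_ne_zero hz)
  have him : (1 + z⁻¹).im = -z.im / normSq z := by simp [inv_im]
  obtain ⟨hz_gt, hz_le⟩ := arg_mem_Ioc z
  obtain ⟨hinv_gt, hinv_le⟩ := arg_mem_Ioc (1 + z⁻¹)
  -- Off the real axis the two arguments have opposite signs.
  rcases lt_trichotomy z.im 0 with hneg | hzero | hpos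
  · have := arg_neg_iff.2 hneg
    have : 0 ≤ arg (1 + z⁻¹) := arg_nonneg_iff.2 (him ▸ by bound)
    constructor <;> linarith
  · have hre : 0 < z.re := (mem_slitPlane_iff.1 hz).resolve_right (not_not_intro hzero)
    have : arg (1 + z⁻¹) = 0 := by
      refine arg_eq_zero_iff.2 ⟨?_, by simp [him, hzero]⟩
      rw [add_re, one_re, inv_re]
      positivity
    constructor <;> linarith
  · have : 0 ≤ arg z := arg_nonneg_iff.2 hpos.le
    have : arg (1 + z⁻¹) < 0 := arg_neg_iff.2 (him ▸ div_neg_of_neg_of_pos (by linarith) hsq)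
    constructor <;> linarith

lemma add_one_cpow_of_mem_slitPlane (hz : z ∈ slitPlane) (s : ℂ) :
    (z + 1) ^ s = z ^ s * (1 + z⁻¹) ^ s := by
  have hz0 := slitPlane_ne_zero hz
  rw [← mul_cpow_of_arg_add_mem (arg_add_arg_one_add_inv_mem_Ioc hz), mul_add, mul_one,
    mul_inv_cancel₀ hz0]

lemma prod_one_add_inv_cpow (hz : z ∈ slitPlane) (s : ℂ) (n : ℕ) :
    ∏ k ∈ Finset.range n, (1 + (z + k)⁻¹) ^ s = (z + n) ^ s * z ^ (-s) := by
  have hzs : z ^ s ≠ 0 := by simp [cpow_eq_zero_iff, slitPlane_ne_zero hz]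
  induction n with
  | zero => simp [cpow_neg, hzs]
  | succ n ih =>
    rw [Finset.prod_range_succ, ih, Nat.cast_succ, ← add_assoc,
      add_one_cpow_of_mem_slitPlane (add_natCast_mem_slitPlane hz n)]
    ring

end SlitPlane

lemma tendsto_natCast_cpow_mul_add_natCast_cpow (z s : ℂ) :
    Tendsto (fun n : ℕ ↦ (n : ℂ) ^ (-s) * (z + n) ^ s) atTop (𝓝 1) := by
  have hbase : Tendsto (fun n : ℕ ↦ 1 + z * (n : ℂ)⁻¹) atTop (𝓝 1) := by
    simpa using (tendsto_inv_atTop_nhds_zero_nat (𝕜 := ℂ)).const_mul z |>.const_add 1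
  have hpow := hbase.cpow (tendsto_const_nhds (x := s)) one_mem_slitPlane
  rw [one_cpow] at hpow
  refine hpow.congr' ?_
  filter_upwards [eventually_ne_atTop 0] with n hn
  have hn' : (n : ℂ) ≠ 0 := Nat.cast_ne_zero.2 hn
  have hns : (n : ℂ) ^ s ≠ 0 := by simp [cpow_eq_zero_iff, hn']
  rw [show z + n = n * (1 + z * (n : ℂ)⁻¹) by field_simp; ring, natCast_mul_cpow, cpow_neg,
    inv_mul_cancel_left₀ hns]

/-- The factor at `w` in the infinite product expressing `w ^ (β - α) * Γ (w + α) / Γ (w + β)`,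
namely the quotient of the values of that function at `w` and `w + 1` for `w` in the slit plane. -/
noncomputable def gammaRatioFactor (α β w : ℂ) : ℂ :=
  (w + β) / (w + α) * (1 + w⁻¹) ^ (α - β)

lemma prod_gammaRatioFactor (α β : ℂ) {z : ℂ} (hz : z ∈ slitPlane) {n : ℕ} (hn : n ≠ 0) :
    ∏ k ∈ Finset.range (n + 1), gammaRatioFactor α β (z + k) =
      GammaSeq (z + α) n / GammaSeq (z + β) n * ((n : ℂ) ^ (β - α) * (z + 1 + n) ^ (α - β)) *
        z ^ (β - α) := by
  have hn' : (n : ℂ) ≠ 0 := Nat.cast_ne_zero.2 hn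
  have hpow : (n : ℂ) ^ (z + α) * (n : ℂ) ^ (β - α) = (n : ℂ) ^ (z + β) := by
    rw [← cpow_add _ _ hn']
    ring_nf
  have hβ : (n : ℂ) ^ (z + β) ≠ 0 := by simp [cpow_eq_zero_iff, hn']
  have hfact : (n.factorial : ℂ) ≠ 0 := Nat.cast_ne_zero.2 n.factorial_ne_zero
  simp only [gammaRatioFactor, Finset.prod_mul_distrib, Finset.prod_div_distrib,
    prod_one_add_inv_cpow hz, GammaSeq, add_right_comm z _ α, add_right_comm z _ β, neg_sub]
  rw [show z + (n + 1 : ℕ) = z + 1 + n by push_cast; ring, ← hpow]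
  rw [← hpow] at hβ
  field_simp [left_ne_zero_of_mul hβ, right_ne_zero_of_mul hβ]

lemma tendsto_prod_gammaRatioFactor (α : ℂ) {β z : ℂ} (hz : z ∈ slitPlane)
    (hβ : ∀ k : ℕ, z + k ≠ -β) :
    Tendsto (fun n : ℕ ↦ ∏ k ∈ Finset.range (n + 1), gammaRatioFactor α β (z + k)) atTop
      (𝓝 (Gamma (z + α) / Gamma (z + β) * z ^ (β - α))) := by
  have hΓ : Gamma (z + β) ≠ 0 := Gamma_ne_zero fun k h ↦ hβ k (by linear_combination h)
  have hpow := tendsto_natCast_cpow_mul_add_natCast_cpow (z + 1) (α - β)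
  rw [neg_sub] at hpow
  have hlim := ((GammaSeq_tendsto_Gamma (z + α)).div (GammaSeq_tendsto_Gamma (z + β)) hΓ).mul
    hpow |>.mul_const (z ^ (β - α))
  rw [mul_one] at hlim
  refine hlim.congr' ?_
  filter_upwards [eventually_ne_atTop 0] with n hn
  exact (prod_gammaRatioFactor α β hz hn).symm

lemma isBigO_gammaRatioFactor_sub_one (α β : ℂ) :
    (fun w ↦ gammaRatioFactor α β w - 1) =O[cobounded ℂ] fun w ↦ (‖w‖ ^ 2)⁻¹ := by
  set f : ℂ → ℂ := fun u ↦ (1 + β * u) / (1 + α * u) * (1 + u) ^ (α - β) with hf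
  have hlin (c : ℂ) : HasDerivAt (fun u : ℂ ↦ 1 + c * u) c 0 := by
    simpa using ((hasDerivAt_id (0 : ℂ)).const_mul c).const_add 1
  have hanalytic : AnalyticAt ℂ f 0 :=
    (AnalyticAt.div (by fun_prop) (by fun_prop) (by simp)).mul
      (AnalyticAt.cpow (by fun_prop) (by fun_prop) (by simp))
  have hderiv : HasDerivAt f 0 0 := by
    have hpow : HasDerivAt (fun u : ℂ ↦ (1 + u) ^ (α - β)) (α - β) 0 := by
      simpa using ((hasDerivAt_id (0 : ℂ)).const_add 1).cpow_const (c := α - β) (by simp)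
    exact (((hlin β).div (hlin α) (by simp)).mul hpow).congr_deriv (by simp)
  have hO := (isBigO_sub_sq_of_hasDerivAt_zero hanalytic hderiv).comp_tendsto
    tendsto_inv₀_cobounded
  refine hO.congr' ?_ (.of_forall fun w ↦ by simp)
  filter_upwards [eventually_ne_cobounded 0] with w hw
  have hquot : (1 + β * w⁻¹) / (1 + α * w⁻¹) = (w + β) / (w + α) := by
    rw [← mul_div_mul_left _ _ hw]
    congr 1 <;> field_simp
  simp [hf, gammaRatioFactor, hquot]

lemma cos_half_arg_mul_le_norm_add (z : ℂ) (t : ℝ) :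
    Real.cos (arg z / 2) * (‖z‖ + t) ≤ ‖z + t‖ := by
  -- Both `z` and `t` make an angle `arg z / 2` with the bisecting direction `exp (i arg z / 2)`.
  set φ : ℝ := arg z / 2 with hφ
  have hz : z * exp (-φ * I) = ‖z‖ * exp (φ * I) := by
    nth_rewrite 1 [← norm_mul_exp_arg_mul_I z]
    rw [mul_assoc, ← exp_add, hφ]
    congr 2
    push_cast
    ring
  have hre : ((z + t) * exp (-φ * I)).re = Real.cos φ * (‖z‖ + t) := by
    rw [add_mul, hz, ← ofReal_neg, add_re, re_ofReal_mul, re_ofReal_mul, exp_ofReal_mul_I_re,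
      exp_ofReal_mul_I_re, Real.cos_neg]
    ring
  calc Real.cos φ * (‖z‖ + t) = ((z + t) * exp (-φ * I)).re := hre.symm
    _ ≤ ‖(z + t) * exp (-φ * I)‖ := re_le_norm _
    _ = ‖z + t‖ := by rw [norm_mul, ← ofReal_neg, norm_exp_ofReal_mul_I, mul_one]

lemma sum_inv_add_sq_le {r : ℝ} (hr : 1 < r) (n : ℕ) :
    ∑ k ∈ Finset.range n, ((r + k) ^ 2)⁻¹ ≤ (r - 1)⁻¹ := by
  have hterm (k : ℕ) : ((r + k) ^ 2)⁻¹ ≤ (r - 1 + k)⁻¹ - (r - 1 + (k + 1 : ℕ))⁻¹ := by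
    have hpos : 0 < r - 1 + k := by linarith [k.cast_nonneg (α := ℝ)]
    calc ((r + k) ^ 2)⁻¹ ≤ ((r - 1 + k) * (r + k))⁻¹ := by
          rw [sq]
          gcongr
          linarith
      _ = (r - 1 + k)⁻¹ - (r - 1 + (k + 1 : ℕ))⁻¹ := by
          rw [show r - 1 + (k + 1 : ℕ) = r + k by push_cast; ring]
          field_simp
          ring
  calc ∑ k ∈ Finset.range n, ((r + k) ^ 2)⁻¹
      ≤ ∑ k ∈ Finset.range n, ((r - 1 + k)⁻¹ - (r - 1 + (k + 1 : ℕ))⁻¹) :=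
        Finset.sum_le_sum fun k _ ↦ hterm k
    _ = (r - 1)⁻¹ - (r - 1 + n)⁻¹ := by
        rw [Finset.sum_range_sub' fun k : ℕ ↦ (r - 1 + k)⁻¹]
        simp
    _ ≤ (r - 1)⁻¹ := sub_le_self _ (inv_nonneg.2 (by linarith [n.cast_nonneg (α := ℝ)]))

/-- The filter of neighbourhoods of infinity in the closed sector `|arg z| ≤ θ`. -/
noncomputable def sectorAtInfinity (θ : ℝ) : Filter ℂ :=
  cobounded ℂ ⊓ 𝓟 {z | |arg z| ≤ θ}

section Sector

variable {θ : ℝ}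

lemma tendsto_norm_sectorAtInfinity : Tendsto norm (sectorAtInfinity θ) atTop :=
  tendsto_norm_cobounded_atTop.mono_left inf_le_left

lemma eventually_abs_arg_le_sectorAtInfinity : ∀ᶠ z in sectorAtInfinity θ, |arg z| ≤ θ :=
  mem_inf_of_right (mem_principal_self _)

lemma eventually_mem_slitPlane_sectorAtInfinity (hθ : θ < π) :
    ∀ᶠ z in sectorAtInfinity θ, z ∈ slitPlane := by
  filter_upwards [eventually_abs_arg_le_sectorAtInfinity,
    tendsto_norm_sectorAtInfinity.eventually_gt_atTop 0] with z harg hnorm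
  exact mem_slitPlane_iff_arg.2 ⟨((le_abs_self _).trans_lt (harg.trans_lt hθ)).ne,
    norm_pos_iff.1 hnorm⟩

lemma exists_mul_norm_add_natCast_le (hθ : θ < π) :
    ∃ δ > 0, ∀ z : ℂ, |arg z| ≤ θ → ∀ k : ℕ, δ * (‖z‖ + k) ≤ ‖z + k‖ := by
  rcases lt_or_ge θ 0 with hneg | hnonneg
  · exact ⟨1, one_pos, fun z hz ↦ absurd (hz.trans_lt hneg) (abs_nonneg _).not_gt⟩
  refine ⟨Real.cos (θ / 2), Real.cos_pos_of_mem_Ioo ⟨by linarith, by linarith⟩,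
    fun z hz k ↦ ?_⟩
  have hcos : Real.cos (θ / 2) ≤ Real.cos (arg z / 2) := by
    rw [← Real.cos_abs (arg z / 2), abs_div, abs_two]
    exact Real.cos_le_cos_of_nonneg_of_le_pi (by positivity) (by linarith) (by linarith)
  calc Real.cos (θ / 2) * (‖z‖ + k) ≤ Real.cos (arg z / 2) * (‖z‖ + k) := by gcongr
    _ ≤ ‖z + k‖ := by exact_mod_cast cos_half_arg_mul_le_norm_add z k

lemma eventually_forall_add_natCast (hθ : θ < π) {p : ℂ → Prop} (hp : ∀ᶠ w in cobounded ℂ, p w) :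
    ∀ᶠ z in sectorAtInfinity θ, ∀ k : ℕ, p (z + k) := by
  obtain ⟨δ, hδ, hsector⟩ := exists_mul_norm_add_natCast_le hθ
  obtain ⟨R, -, hR⟩ := hasBasis_cobounded_norm.eventually_iff.1 hp
  filter_upwards [eventually_abs_arg_le_sectorAtInfinity,
    (tendsto_norm_sectorAtInfinity.const_mul_atTop hδ).eventually_ge_atTop R] with z harg hnorm k
  refine hR ?_
  calc R ≤ δ * ‖z‖ := hnorm
    _ ≤ δ * (‖z‖ + k) := by gcongr; simp
    _ ≤ ‖z + k‖ := hsector z harg k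

lemma exists_norm_prod_gammaRatioFactor_sub_one_le (hθ : θ < π) (α β : ℂ) :
    ∃ C, ∀ᶠ z in sectorAtInfinity θ, ∀ n : ℕ,
      ‖∏ k ∈ Finset.range n, gammaRatioFactor α β (z + k) - 1‖ ≤
        Real.exp (C * (‖z‖ - 1)⁻¹) - 1 := by
  obtain ⟨δ, hδ, hsector⟩ := exists_mul_norm_add_natCast_le hθ
  obtain ⟨C, hC, hbound⟩ := (isBigO_gammaRatioFactor_sub_one α β).exists_pos
  refine ⟨C * (δ ^ 2)⁻¹, ?_⟩
  filter_upwards [eventually_forall_add_natCast hθ hbound.bound,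
    eventually_abs_arg_le_sectorAtInfinity,
    tendsto_norm_sectorAtInfinity.eventually_gt_atTop 1] with z hfactor harg hnorm n
  have hterm (k : ℕ) :
      ‖gammaRatioFactor α β (z + k) - 1‖ ≤ C * (δ ^ 2)⁻¹ * ((‖z‖ + k) ^ 2)⁻¹ := by
    calc ‖gammaRatioFactor α β (z + k) - 1‖ ≤ C * (‖z + k‖ ^ 2)⁻¹ := by simpa using hfactor k
      _ ≤ C * ((δ * (‖z‖ + k)) ^ 2)⁻¹ := by gcongr; exact hsector z harg k
      _ = C * (δ ^ 2)⁻¹ * ((‖z‖ + k) ^ 2)⁻¹ := by rw [mul_pow, mul_inv, mul_assoc]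
  have hsum : ∑ k ∈ Finset.range n, ‖gammaRatioFactor α β (z + k) - 1‖ ≤
      C * (δ ^ 2)⁻¹ * (‖z‖ - 1)⁻¹ := by
    calc ∑ k ∈ Finset.range n, ‖gammaRatioFactor α β (z + k) - 1‖
        ≤ ∑ k ∈ Finset.range n, C * (δ ^ 2)⁻¹ * ((‖z‖ + k) ^ 2)⁻¹ :=
          Finset.sum_le_sum fun k _ ↦ hterm k
      _ ≤ C * (δ ^ 2)⁻¹ * (‖z‖ - 1)⁻¹ := by
          rw [← Finset.mul_sum]
          gcongr
          exact sum_inv_add_sq_le hnorm n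
  have hprod := (Finset.range n).norm_prod_one_add_sub_one_le
    fun k ↦ gammaRatioFactor α β (z + k) - 1
  simp only [add_sub_cancel] at hprod
  exact hprod.trans (by gcongr)

theorem tendsto_Gamma_add_div_Gamma_add_mul_cpow (hθ : θ < π) (α β : ℂ) :
    Tendsto (fun z ↦ Gamma (z + α) / Gamma (z + β) * z ^ (β - α)) (sectorAtInfinity θ)
      (𝓝 1) := by
  obtain ⟨C, hC⟩ := exists_norm_prod_gammaRatioFactor_sub_one_le hθ α β
  have hbound : Tendsto (fun z : ℂ ↦ Real.exp (C * (‖z‖ - 1)⁻¹) - 1) (sectorAtInfinity θ)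
      (𝓝 0) := by
    have hinv := (tendsto_atTop_add_const_right _ (-1)
      (tendsto_norm_sectorAtInfinity (θ := θ))).inv_tendsto_atTop
    simpa [sub_eq_add_neg] using (hinv.const_mul C).rexp.sub_const 1
  rw [tendsto_iff_norm_sub_tendsto_zero]
  refine squeeze_zero' (.of_forall fun _ ↦ norm_nonneg _) ?_ hbound
  filter_upwards [hC, eventually_mem_slitPlane_sectorAtInfinity hθ,
    eventually_forall_add_natCast hθ (eventually_ne_cobounded (-β))] with z hprod hz hβ
  exact le_of_tendsto ((tendsto_prod_gammaRatioFactor α hz hβ).sub_const 1).norm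
    (.of_forall fun n ↦ hprod (n + 1))

end Sector

lemma inv_Gamma_eq_Gamma_one_sub_mul_sin {s : ℂ} (hs : Gamma (1 - s) ≠ 0) :
    (Gamma s)⁻¹ = Gamma (1 - s) * sin (π * s) / π := by
  calc (Gamma s)⁻¹ = Gamma (1 - s) * (Gamma s * Gamma (1 - s))⁻¹ := by
        rw [mul_inv_rev, mul_inv_cancel_left₀ hs]
    _ = Gamma (1 - s) * sin (π * s) / π := by
        rw [Gamma_mul_Gamma_one_sub, inv_div, mul_div_assoc]

lemma two_mul_exp_mul_sin (x : ℂ) :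
    2 * exp (I * (π / 2 - x)) * sin x = 1 - exp (-(2 * I * x)) := by
  have hexp : exp (I * (π / 2 - x)) = I * exp (-x * I) := by
    rw [show I * (π / 2 - x) = π / 2 * I + -x * I by ring, exp_add, exp_pi_div_two_mul_I]
  have hinv : exp (-x * I) * exp (x * I) = 1 := by rw [← exp_add]; simp
  have hsq : exp (-(2 * I * x)) = exp (-x * I) * exp (-x * I) := by rw [← exp_add]; ring_nf
  rw [hexp, hsq, sin]
  linear_combination (exp (-x * I) ^ 2 - exp (-x * I) * exp (x * I)) * I_sq + hinv

lemma comap_im_atTop_le_cobounded : comap im atTop ≤ cobounded ℂ := by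
  rw [← comap_norm_atTop, ← tendsto_iff_comap]
  exact tendsto_atTop_mono (fun z ↦ (le_abs_self _).trans (abs_im_le_norm z)) tendsto_comap

lemma eventually_Gamma_add_ne_zero_comap_im_atTop (c : ℂ) :
    ∀ᶠ z in comap im atTop, Gamma (z + c) ≠ 0 := by
  filter_upwards [tendsto_comap.eventually_gt_atTop (-c.im)] with z hz
  refine Gamma_ne_zero fun m h ↦ ?_
  have him : z.im + c.im = 0 := by simpa using congrArg im h
  linarith

lemma tendsto_two_mul_exp_mul_sin_comap_im_atTop (a : ℂ) :
    Tendsto (fun z ↦ 2 * exp (I * (π / 2 - π * (a - z))) * sin (π * (a - z))) (comap im atTop)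
      (𝓝 1) := by
  simp only [two_mul_exp_mul_sin]
  have hre : Tendsto (fun z ↦ (-(2 * I * (π * (a - z)))).re) (comap im atTop) atBot := by
    have him : Tendsto (fun z : ℂ ↦ 2 * π * a.im + -(2 * π) * z.im) (comap im atTop) atBot :=
      tendsto_atBot_add_const_left _ _
        (tendsto_comap.const_mul_atTop_of_neg (by linarith [Real.pi_pos]))
    refine him.congr fun z ↦ ?_
    simp
    ring
  simpa using (tendsto_exp_comap_re_atBot.comp (tendsto_comap_iff.2 hre)).const_sub 1

theorem tendsto_exp_mul_cpow_div_Gamma_sub_mul_Gamma_add {θ : ℝ} (hθ : θ < π) (a : ℂ) :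
    Tendsto (fun z ↦ 2 * π * exp (I * (π / 2 - π * (a - z))) * z ^ (2 * a - 1) /
      (Gamma (a - z) * Gamma (a + z))) (comap im atTop ⊓ 𝓟 {z | |arg z| ≤ θ}) (𝓝 1) := by
  have hsin := (tendsto_two_mul_exp_mul_sin_comap_im_atTop a).mono_left
    (inf_le_left (b := 𝓟 {z | |arg z| ≤ θ}))
  have hratio := (tendsto_Gamma_add_div_Gamma_add_mul_cpow hθ (1 - a) a).mono_left
    (inf_le_inf_right _ comap_im_atTop_le_cobounded)
  have hmul := hsin.mul hratio
  rw [mul_one] at hmul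
  refine hmul.congr' ?_
  filter_upwards [mem_inf_of_left (eventually_Gamma_add_ne_zero_comap_im_atTop (1 - a))] with z hz
  have hone_sub : 1 - (a - z) = z + (1 - a) := by ring
  have hreflection := inv_Gamma_eq_Gamma_one_sub_mul_sin (s := a - z) (by rwa [hone_sub])
  rw [div_eq_mul_inv _ (_ * _), mul_inv, hreflection, hone_sub, add_comm a z,
    show a - (1 - a) = 2 * a - 1 by ring]
  field_simp

theorem stmt12_general (b σ : ℂ) (hb : 0 < b.re) :
    Tendsto (fun Λ : ℝ =>
      exp (-(π * b * Λ)) *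
        (2 * π * exp (π * b * (σ + I * b / 2)) * (I * b * Λ) ^ (-(b * (b - 2 * I * σ))) /
          (Gamma ((1 - b ^ 2) / 2 - I * b * (Λ - σ)) *
            Gamma ((1 - b ^ 2) / 2 + I * b * (Λ + σ))))) atTop (𝓝 1) := by
  have him : 0 < (I * b).im := by simpa using hb
  have harg : |arg (I * b)| < π := by
    rw [abs_of_nonneg (arg_nonneg_iff.2 him.le)]
    exact arg_lt_pi_iff.2 (.inr him.ne')
  have hray : Tendsto (fun Λ : ℝ ↦ I * b * Λ) atTop
      (comap im atTop ⊓ 𝓟 {z | |arg z| ≤ |arg (I * b)|}) := by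
    refine tendsto_inf.2 ⟨tendsto_comap_iff.2 ?_, tendsto_principal.2 ?_⟩
    · exact (tendsto_id.const_mul_atTop him).congr fun Λ ↦ (im_mul_ofReal _ _).symm
    · filter_upwards [eventually_gt_atTop 0] with Λ hΛ
      exact (congrArg abs (arg_mul_real hΛ _)).le
  set a : ℂ := (1 - b ^ 2) / 2 + I * b * σ with ha
  refine ((tendsto_exp_mul_cpow_div_Gamma_sub_mul_Gamma_add harg a).comp hray).congr fun Λ ↦ ?_
  have hexp : exp (I * (π / 2 - π * (a - I * b * Λ))) =
      exp (-(π * b * Λ)) * exp (π * b * (σ + I * b / 2)) := by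
    rw [← exp_add, ha]
    congr 1
    linear_combination (π * b * (Λ - σ)) * I_sq
  simp only [Function.comp_apply, hexp]
  rw [show 2 * a - 1 = -(b * (b - 2 * I * σ)) by rw [ha]; ring,
    show a - I * b * Λ = (1 - b ^ 2) / 2 - I * b * (Λ - σ) by rw [ha]; ring,
    show a + I * b * Λ = (1 - b ^ 2) / 2 + I * b * (Λ + σ) by rw [ha]; ring]
  ring

/-- The limit of the coefficient function `χ` defined in (3.41), established in the proof of
Lemma 3.3 of the paper: `e^{−πbΛ} χ(Λ) → 1` as `Λ → +∞`. -/
theorem stmt12 (b σ : ℝ) (hb : 0 < b) :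
    Tendsto (fun Λ : ℝ =>
      Complex.exp (-(Real.pi * b * Λ)) *
        (2 * Real.pi * Complex.exp (Real.pi * b * (σ + I * b / 2)) *
          (I * b * Λ) ^ (-((b : ℂ) * (b - 2 * I * σ))) /
          (Complex.Gamma ((1 - b ^ 2) / 2 - I * b * (Λ - σ)) *
            Complex.Gamma ((1 - b ^ 2) / 2 + I * b * (Λ + σ))))) atTop (nhds 1) :=
  stmt12_general b σ (by simpa using hb)
end

section
/- Let b > 0, let θ₀, θ_t, θ_* ∈ ℝ, and let σ ∈ ℝ with σ ≠ 0. For real Λ > 0 define G(Λ) = e^{−πbΛ} [ −2 cosh(2πb((Λ+θ_*)/2 + θ_t + ib/2)) + 4 ∑_{κ=±1} [ ∏_{ε=±1} cosh(πb(ε(Λ−θ_*)/2 − ib/2 − (Λ+θ_*)/2 − κσ)) · cosh(πb(εθ₀ − ib/2 − θ_t − κσ)) ] / [ sinh(2πb(κσ + ib/2)) · sinh(2πbκσ) ] ]. Define V(s) = 2 e^{−πb(s − ib/2)} cosh(πb(ib/2 + θ_* − s)) · ∏_{ε=±1} cosh(πb(−ib/2 − θ_t + s + εθ₀)) / [ sinh(πb(2s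 − ib)) · sinh(2πbs) ]. Then, as Λ → +∞, G(Λ) converges to −e^{πb(ib + θ_* + 2θ_t)} + V(σ) + V(−σ). -/
open Complex Filter

/-- The coefficient function `V(s)` of the dual confluent difference operator
(even index) appearing in Lemma 3.3 of the paper. -/
noncomputable def Vfun (b θ0 θt θs : ℝ) (s : ℝ) : ℂ :=
  2 * Complex.exp (-(Real.pi * b * (s - I * b / 2))) *
    Complex.cosh (Real.pi * b * (I * b / 2 + θs - s)) *
    (Complex.cosh (Real.pi * b * (-(I * b) / 2 - θt + s + θ0)) *
      Complex.cosh (Real.pi * b * (-(I * b) / 2 - θt + s - θ0))) /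
    (Complex.sinh (Real.pi * b * (2 * s - I * b)) * Complex.sinh (2 * Real.pi * b * s))

/-!
Under the confluent substitution, exactly one of the four `cosh` factors in each summand of the
potential depends on `Λ`: as `cosh` is even, it equals `cosh (πbΛ + c)` for a constant `c`. The
leading term `cosh (2πb(θ₁ + θ_t + ib/2))` has the same form, and `e^{-w} cosh (w + c)` tends to
`e^c / 2` as `Re w → +∞`. The summand for the sign `κ` thus tends to `V(-κσ)`.
-/

theorem tendsto_exp_neg_mul_cosh_add (c : ℂ) :
    Tendsto (fun w : ℂ => exp (-w) * cosh (w + c)) (comap re atTop) (nhds (exp c / 2)) := by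
  have hre : Tendsto (fun w : ℂ => (-(w + w)).re) (comap re atTop) atBot := by
    simpa only [neg_re, add_re, Function.comp_def] using
      tendsto_neg_atTop_atBot.comp (tendsto_comap.atTop_add_atTop tendsto_comap)
  have hdecay : Tendsto (fun w : ℂ => exp (-(w + w))) (comap re atTop) (nhds 0) :=
    tendsto_exp_nhds_zero_iff.mpr hre
  have hlim : Tendsto (fun w : ℂ => (exp c + exp (-c) * exp (-(w + w))) / 2)
      (comap re atTop) (nhds (exp c / 2)) := by
    simpa only [mul_zero, add_zero] using
      ((hdecay.const_mul (exp (-c))).const_add (exp c)).div_const 2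
  refine hlim.congr fun w => ?_
  rw [cosh, mul_div_assoc', mul_add, ← exp_add, ← exp_add, ← exp_add]
  ring_nf

theorem tendsto_exp_neg_mul_cosh_mul_add {a : ℝ} (ha : 0 < a) (c : ℂ) :
    Tendsto (fun x : ℝ => exp (-(a * x)) * cosh (a * x + c)) atTop (nhds (exp c / 2)) := by
  have hre : Tendsto (fun x : ℝ => (a * x : ℂ)) atTop (comap re atTop) := by
    simpa only [tendsto_comap_iff, Function.comp_def, re_ofReal_mul, ofReal_re, id_eq] using
      tendsto_id.const_mul_atTop ha
  exact (tendsto_exp_neg_mul_cosh_add c).comp hre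

/-- The summand of the potential `H_F⁰` of the Virasoro fusion kernel difference operator attached
to a sign `κ`, without its prefactor `4`. The argument `s` stands for `κσ_s`. -/
noncomputable def fusionSummand (b θ0 θt θ1 θinf s : ℂ) : ℂ :=
  (cosh (Real.pi * b * (θinf - I * b / 2 - θ1 - s)) *
      cosh (Real.pi * b * (-θinf - I * b / 2 - θ1 - s)) *
      (cosh (Real.pi * b * (θ0 - I * b / 2 - θt - s)) *
        cosh (Real.pi * b * (-θ0 - I * b / 2 - θt - s)))) /
    (sinh (2 * Real.pi * b * (s + I * b / 2)) * sinh (2 * Real.pi * b * s))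

theorem two_mul_exp_mul_fusionSummand_confluent (b θ0 θt θs s Λ : ℝ) :
    2 * exp (-(Real.pi * b * (s - I * b / 2))) *
        fusionSummand b θ0 θt ((Λ + θs) / 2) ((Λ - θs) / 2) (-s) =
      cosh (Real.pi * b * Λ + -(Real.pi * b * (s - I * b / 2))) * Vfun b θ0 θt θs s := by
  have hconst : cosh (Real.pi * b * ((Λ - θs) / 2 - I * b / 2 - (Λ + θs) / 2 - -s)) =
      cosh (Real.pi * b * (I * b / 2 + θs - s)) := by
    rw [← cosh_neg]; ring_nf
  have hgrow : cosh (Real.pi * b * (-((Λ - θs) / 2) - I * b / 2 - (Λ + θs) / 2 - -s)) =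
      cosh (Real.pi * b * Λ + -(Real.pi * b * (s - I * b / 2))) := by
    rw [← cosh_neg]; ring_nf
  have hplus : (Real.pi * b * (θ0 - I * b / 2 - θt - -s) : ℂ) =
      Real.pi * b * (-(I * b) / 2 - θt + s + θ0) := by ring
  have hminus : (Real.pi * b * (-θ0 - I * b / 2 - θt - -s) : ℂ) =
      Real.pi * b * (-(I * b) / 2 - θt + s - θ0) := by ring
  have hshift : (2 * Real.pi * b * (-s + I * b / 2) : ℂ) =
      -(Real.pi * b * (2 * s - I * b)) := by ring
  have hneg : (2 * Real.pi * b * -s : ℂ) = -(2 * Real.pi * b * s) := by ring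
  rw [fusionSummand, Vfun, hconst, hgrow, hplus, hminus, hshift, hneg, sinh_neg, sinh_neg,
    neg_mul_neg]
  ring

theorem tendsto_fusionSummand_confluent {b : ℝ} (hb : 0 < b) (θ0 θt θs s : ℝ) :
    Tendsto (fun Λ : ℝ => exp (-(Real.pi * b * Λ)) *
        (4 * fusionSummand b θ0 θt ((Λ + θs) / 2) ((Λ - θs) / 2) (-s)))
      atTop (nhds (Vfun b θ0 θt θs s)) := by
  set c : ℂ := -(Real.pi * b * (s - I * b / 2)) with hc
  have hcosh : Tendsto (fun Λ : ℝ => exp (-(Real.pi * b * Λ)) * cosh (Real.pi * b * Λ + c))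
      atTop (nhds (exp c / 2)) := by
    simpa only [ofReal_mul] using tendsto_exp_neg_mul_cosh_mul_add (mul_pos Real.pi_pos hb) c
  have hlim := hcosh.mul_const (2 / exp c * Vfun b θ0 θt θs s)
  have hvalue : exp c / 2 * (2 / exp c * Vfun b θ0 θt θs s) = Vfun b θ0 θt θs s := by
    field_simp
  rw [hvalue] at hlim
  refine hlim.congr fun Λ => ?_
  have hfactor := two_mul_exp_mul_fusionSummand_confluent b θ0 θt θs s Λ
  rw [← hc] at hfactor
  field_simp
  linear_combination -2 * hfactor

/-- The limit established in the proof of Lemma 3.3 of the paper: `e^{−πbΛ}` times the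
potential `H_F⁰` of the Virasoro fusion-kernel difference operator, evaluated at the
confluent parameter substitution, converges as `Λ → +∞` to the dual potential
`H̃⁰ = −e^{πb(ib+θ_*+2θ_t)} + V(σ) + V(−σ)`. -/
theorem stmt13 (b θ0 θt θs σ : ℝ) (hb : 0 < b) (hσ : σ ≠ 0) :
    Tendsto (fun Λ : ℝ =>
      Complex.exp (-(Real.pi * b * Λ)) *
        (-2 * Complex.cosh (2 * Real.pi * b * ((Λ + θs) / 2 + θt + I * b / 2)) +
          4 * ((Complex.cosh (Real.pi * b * ((Λ - θs) / 2 - I * b / 2 - (Λ + θs) / 2 - σ)) *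
                  Complex.cosh
                    (Real.pi * b * (-((Λ - θs) / 2) - I * b / 2 - (Λ + θs) / 2 - σ)) *
                  (Complex.cosh (Real.pi * b * (θ0 - I * b / 2 - θt - σ)) *
                    Complex.cosh (Real.pi * b * (-θ0 - I * b / 2 - θt - σ)))) /
                (Complex.sinh (2 * Real.pi * b * (σ + I * b / 2)) *
                  Complex.sinh (2 * Real.pi * b * σ)) +
              (Complex.cosh (Real.pi * b * ((Λ - θs) / 2 - I * b / 2 - (Λ + θs) / 2 + σ)) *
                  Complex.cosh
                    (Real.pi * b * (-((Λ - θs) / 2) - I * b / 2 - (Λ + θs) / 2 + σ)) *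
                  (Complex.cosh (Real.pi * b * (θ0 - I * b / 2 - θt + σ)) *
                    Complex.cosh (Real.pi * b * (-θ0 - I * b / 2 - θt + σ)))) /
                (Complex.sinh (2 * Real.pi * b * (-σ + I * b / 2)) *
                  Complex.sinh (2 * Real.pi * b * -σ))))) atTop
      (nhds
        (-Complex.exp (Real.pi * b * (I * b + θs + 2 * θt)) +
          Vfun b θ0 θt θs σ + Vfun b θ0 θt θs (-σ))) := by
  have hlead : Tendsto (fun Λ : ℝ => exp (-(Real.pi * b * Λ)) *
      (-2 * cosh (2 * Real.pi * b * ((Λ + θs) / 2 + θt + I * b / 2)))) atTop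
      (nhds (-exp (Real.pi * b * (I * b + θs + 2 * θt)))) := by
    convert (tendsto_exp_neg_mul_cosh_mul_add (mul_pos Real.pi_pos hb)
      (Real.pi * b * (I * b + θs + 2 * θt))).const_mul (-2) using 2
    · push_cast
      ring_nf
    · ring
  have hpos := tendsto_fusionSummand_confluent hb θ0 θt θs (-σ)
  have hneg := tendsto_fusionSummand_confluent hb θ0 θt θs σ
  refine ((hlead.add hneg).add hpos).congr fun Λ => ?_
  simp only [fusionSummand, ofReal_neg, neg_neg, sub_neg_eq_add]
  ring
end
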